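/- (Key Claim.) Let X be a stably compact space and Y a T0 space. If r is a proper surjective map from X to Y, then the induced map V_{1 wk}(r) : V_{1 wk}(X) → V_{1 wk}(Y), defined by V_{1 wk}(r)(ν)(V) = ν(r⁻¹(V)), is a proper surjective map between the spaces of probability valuations with the weak topology. -/

import Mathlib

/-!
Only compactness, local compactness and coherence of `X` are used, and no measure theory.

Dropping the continuity axiom from probability valuations on `X` gives a space `FinVal X` which is
closed in `[0, 1] ^ Opens X`, hence compact. Write `W ≪ U` (`WayInside`) when a compact saturated
set fits between the open sets `W` and `U`. Because `≪` is compatible with finite unions and, by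
coherence, finite intersections, the continuous part `U ↦ sup {m W | W ≪ U}` of `m : FinVal X` is a
probability valuation (`isProbValuation_contPart`). It depends continuously on `m` for the weak
topology, and it fixes the valuations that are already continuous, so `contRetr` presents
`V_1(X)` as a continuous image of a compact space.

Properness of `r` says that every open `V` of `Y` is the directed union of the open `V'` with
`r⁻¹ V' ≪ r⁻¹ V` (`exists_comap_wayInside`). Consequently `μ V` is the supremum of these `μ V'`,
and `μ ≤ m ∘ r⁻¹` implies `μ ≤ contPart m ∘ r⁻¹` (`le_contPart_comap`). The three claims follow.

* The preimage of `↑μ` is the image under `contRetr` of the closed, hence compact, set of all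
  `m : FinVal X` with `μ ≤ m ∘ r⁻¹`.
* For closed `F`, the set `↓V(r)(F)` is closed by a finite-cover argument on the compact set
  `contRetr⁻¹(F)`.
* For surjectivity, the conditions `m (r⁻¹ V) = μ V` are closed in `FinVal X`, and any finite set
  of them is solved by a combination of point masses along a maximal chain in the finite sublattice
  generated by the sets `V` involved (`exists_simple_on_finite`). By compactness some `m` satisfies
  all of them, and so does its continuous part.
-/

open Set TopologicalSpace

universe u v

section ScottTopology

variable {α : Type u}

/-- A Scott-open subset of a preorder: an upward-closed set that is inaccessible by
directed suprema. -/
def ScottOpen [Preorder α] (U : Set α) : Prop :=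
  IsUpperSet U ∧ ∀ d : Set α, d.Nonempty → DirectedOn (· ≤ ·) d →
    ∀ a : α, IsLUB d a → a ∈ U → (d ∩ U).Nonempty

/-- The Scott topology on a preorder. -/
def scottTop (α : Type u) [Preorder α] : TopologicalSpace α where
  IsOpen := ScottOpen
  isOpen_univ := by
    refine ⟨isUpperSet_univ, ?_⟩
    intro d hd _ a _ _
    obtain ⟨x, hx⟩ := hd
    exact ⟨x, hx, trivial⟩
  isOpen_inter := by
    rintro U V ⟨hU, hU'⟩ ⟨hV, hV'⟩
    refine ⟨hU.inter hV, ?_⟩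
    intro d hd hdir a ha hmem
    obtain ⟨x, hxd, hxU⟩ := hU' d hd hdir a ha hmem.1
    obtain ⟨y, hyd, hyV⟩ := hV' d hd hdir a ha hmem.2
    obtain ⟨z, hzd, hxz, hyz⟩ := hdir x hxd y hyd
    exact ⟨z, hzd, hU hxz hxU, hV hyz hyV⟩
  isOpen_sUnion := by
    intro S hS
    constructor
    · intro a b hab ha
      obtain ⟨U, hUS, haU⟩ := ha
      exact ⟨U, hUS, (hS U hUS).1 hab haU⟩
    · intro d hd hdir a ha hmem
      obtain ⟨U, hUS, haU⟩ := hmem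
      obtain ⟨x, hxd, hxU⟩ := (hS U hUS).2 d hd hdir a ha haU
      exact ⟨x, hxd, U, hUS, hxU⟩

/-- A dcpo: every nonempty directed subset has a least upper bound. -/
def IsDcpo (α : Type u) [Preorder α] : Prop :=
  ∀ d : Set α, d.Nonempty → DirectedOn (· ≤ ·) d → ∃ a : α, IsLUB d a

/-- The upward closure `↑E = {x | ∃ e ∈ E, e ≤ x}` of a set. -/
def upClos [Preorder α] (E : Set α) : Set α := {x | ∃ e ∈ E, e ≤ x}

/-- A finitary compact: a set of the form `↑E` with `E` finite and nonempty. -/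
def IsFinitaryCompact [Preorder α] (A : Set α) : Prop :=
  ∃ E : Set α, E.Finite ∧ E.Nonempty ∧ A = upClos E

/-- `Fin(α)`: the nonempty finitary compacts of `α`, ordered by reverse inclusion. -/
def FinCompacts (α : Type u) [Preorder α] : Type u := {A : Set α // IsFinitaryCompact A}

instance FinCompacts.instPartialOrder [Preorder α] : PartialOrder (FinCompacts α) where
  le A B := B.1 ⊆ A.1
  le_refl A := subset_rfl
  le_trans A B C h1 h2 := subset_trans h2 h1
  le_antisymm A B h1 h2 := Subtype.ext (subset_antisymm h2 h1)

/-- `U ⋘ x`: every directed family whose least upper bound is above `x` has some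
member in `U`. -/
def approxes [Preorder α] (U : Set α) (x : α) : Prop :=
  ∀ d : Set α, d.Nonempty → DirectedOn (· ≤ ·) d →
    ∀ a : α, IsLUB d a → x ≤ a → ∃ z ∈ d, z ∈ U

/-- A quasi-deflation: a map `φ : α → Fin_σ(α)`, continuous for the Scott topologies,
such that `x ∈ φ x` for every `x`, and with finite image. -/
def IsQuasiDeflation [Preorder α] (φ : α → FinCompacts α) : Prop :=
  @Continuous α (FinCompacts α) (scottTop α) (scottTop (FinCompacts α)) φ ∧
  (∀ x : α, x ∈ (φ x).1) ∧ (Set.range φ).Finite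

/-- A generating family of quasi-deflations: a (nonempty) family of quasi-deflations,
directed in the pointwise reverse-inclusion order, with `⋂ i, φ i x = ↑x` for all `x`. -/
def IsGeneratingFamily [Preorder α] {I : Type v} (φ : I → α → FinCompacts α) : Prop :=
  Nonempty I ∧
  (∀ i j : I, ∃ k : I, (∀ x, (φ k x).1 ⊆ (φ i x).1) ∧ (∀ x, (φ k x).1 ⊆ (φ j x).1)) ∧
  (∀ i, IsQuasiDeflation (φ i)) ∧
  (∀ x : α, (⋂ i, (φ i x).1) = Set.Ici x)

/-- A QRB-domain: a pointed dcpo with a generating family of quasi-deflations. -/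
def IsQRBDomain (α : Type u) [PartialOrder α] : Prop :=
  IsDcpo α ∧ (∃ b : α, ∀ x, b ≤ x) ∧
  ∃ (I : Type u) (φ : I → α → FinCompacts α), IsGeneratingFamily φ

/-- An ωQRB-domain: a pointed dcpo with a countable generating family of
quasi-deflations. -/
def IsOmegaQRBDomain (α : Type u) [PartialOrder α] : Prop :=
  IsDcpo α ∧ (∃ b : α, ∀ x, b ≤ x) ∧
  ∃ (I : Type u), Countable I ∧
    ∃ φ : I → α → FinCompacts α, IsGeneratingFamily φ

/-- A deflation on a pointed dcpo: a Scott-continuous map below the identity, with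
finite image. -/
def IsDeflation [Preorder α] (f : α → α) : Prop :=
  @Continuous α α (scottTop α) (scottTop α) f ∧ (∀ x, f x ≤ x) ∧ (Set.range f).Finite

/-- An RB-domain: a pointed dcpo with a directed family of deflations whose pointwise
least upper bound is the identity. -/
def IsRBDomain (α : Type u) [PartialOrder α] : Prop :=
  IsDcpo α ∧ (∃ b : α, ∀ x, b ≤ x) ∧
  ∃ (I : Type u) (f : I → α → α), Nonempty I ∧
    (∀ i j : I, ∃ k : I, (∀ x, f i x ≤ f k x) ∧ (∀ x, f j x ≤ f k x)) ∧
    (∀ i, IsDeflation (f i)) ∧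
    ∀ x : α, IsLUB (Set.range fun i => f i x) x

/-- An ωB-domain (SFP-domain): a pointed dcpo with a non-decreasing sequence of
idempotent deflations whose pointwise least upper bound is the identity. -/
def IsOmegaBDomain (α : Type u) [PartialOrder α] : Prop :=
  IsDcpo α ∧ (∃ b : α, ∀ x, b ≤ x) ∧
  ∃ f : ℕ → α → α,
    (∀ i, IsDeflation (f i)) ∧
    (∀ i, ∀ x, f i (f i x) = f i x) ∧
    (∀ i j : ℕ, i ≤ j → ∀ x, f i x ≤ f j x) ∧
    ∀ x : α, IsLUB (Set.range fun i => f i x) x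

/-- A map finitely separated from the identity. -/
def IsFinitelySeparated [Preorder α] (f : α → α) : Prop :=
  ∃ M : Set α, M.Finite ∧ ∀ x : α, ∃ m ∈ M, f x ≤ m ∧ m ≤ x

/-- An FS-domain: a pointed dcpo with a directed family of continuous maps, each
finitely separated from the identity, whose pointwise least upper bound is the
identity. -/
def IsFSDomain (α : Type u) [PartialOrder α] : Prop :=
  IsDcpo α ∧ (∃ b : α, ∀ x, b ≤ x) ∧
  ∃ (I : Type u) (f : I → α → α), Nonempty I ∧
    (∀ i j : I, ∃ k : I, (∀ x, f i x ≤ f k x) ∧ (∀ x, f j x ≤ f k x)) ∧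
    (∀ i, @Continuous α α (scottTop α) (scottTop α) (f i) ∧ IsFinitelySeparated (f i)) ∧
    ∀ x : α, IsLUB (Set.range fun i => f i x) x

/-- A controlled QRB-domain: a pointed dcpo with a directed family of controlled
quasi-deflations `(f i, φ i)` (i.e. `φ i x ⊆ ↑(f i x)`) with `x = sup_i f i x`. -/
def IsControlledQRBDomain (α : Type u) [PartialOrder α] : Prop :=
  IsDcpo α ∧ (∃ b : α, ∀ x, b ≤ x) ∧
  ∃ (I : Type u) (f : I → α → α) (φ : I → α → FinCompacts α), Nonempty I ∧
    (∀ i j : I, ∃ k : I,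
      ((∀ x, f i x ≤ f k x) ∧ ∀ x, (φ k x).1 ⊆ (φ i x).1) ∧
      ((∀ x, f j x ≤ f k x) ∧ ∀ x, (φ k x).1 ⊆ (φ j x).1)) ∧
    (∀ i, @Continuous α α (scottTop α) (scottTop α) (f i) ∧ IsQuasiDeflation (φ i) ∧
      ∀ x, (φ i x).1 ⊆ Set.Ici (f i x)) ∧
    ∀ x : α, IsLUB (Set.range fun i => f i x) x

/-- A continuous dcpo: for every `x`, the set of elements way-below `x` is
(nonempty and) directed and has `x` as least upper bound. -/
def IsContinuousDcpo (α : Type u) [Preorder α] : Prop :=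
  IsDcpo α ∧ ∀ x : α,
    {y : α | approxes (Set.Ici y) x}.Nonempty ∧
    DirectedOn (· ≤ ·) {y : α | approxes (Set.Ici y) x} ∧
    IsLUB {y : α | approxes (Set.Ici y) x} x

/-- The finitary compacts `↑E` (E finite nonempty) that approximate `x`. -/
def finUpsBelow [Preorder α] (x : α) : Set (Set α) :=
  {A | (∃ E : Set α, E.Finite ∧ E.Nonempty ∧ A = upClos E) ∧ approxes A x}

/-- A quasi-continuous dcpo. -/
def IsQuasiContinuous (α : Type u) [Preorder α] : Prop :=
  IsDcpo α ∧ ∀ x : α,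
    (finUpsBelow x).Nonempty ∧
    DirectedOn (fun A B : Set α => B ⊆ A) (finUpsBelow x) ∧
    ⋂₀ finUpsBelow x = Set.Ici x

/-- The upper Vietoris topology on `Fin(α)` (the subspace topology induced from the
Smyth powerspace of `α` with its Scott topology), generated by the sets
`◻U = {↑E | ↑E ⊆ U}` for `U` Scott-open. -/
def finUpperVietoris (α : Type u) [Preorder α] : TopologicalSpace (FinCompacts α) :=
  TopologicalSpace.generateFrom
    {S | ∃ U : Set α, ScottOpen U ∧ S = {A : FinCompacts α | A.1 ⊆ U}}

end ScottTopology

section Spaces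

variable {X : Type u} {Y : Type v}

/-- The specialization preorder of a topological space: `x ≤ y` iff every open set
containing `x` contains `y`. -/
def specLE [TopologicalSpace X] (x y : X) : Prop :=
  ∀ U : Set X, IsOpen U → x ∈ U → y ∈ U

/-- `↑x` in the specialization preorder. -/
def specUp [TopologicalSpace X] (x : X) : Set X := {y | specLE x y}

/-- Upward closure of a set in the specialization preorder. -/
def specUpSet [TopologicalSpace X] (A : Set X) : Set X := {y | ∃ a ∈ A, specLE a y}

/-- Downward closure of a set in the specialization preorder. -/
def specDownSet [TopologicalSpace X] (A : Set X) : Set X := {x | ∃ a ∈ A, specLE x a}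

/-- A saturated set: one that is upward closed in the specialization preorder. -/
def IsSaturatedSet [TopologicalSpace X] (A : Set X) : Prop :=
  ∀ x ∈ A, ∀ y : X, specLE x y → y ∈ A

/-- A coherent space: the intersection of any two compact saturated subsets is
compact. -/
def IsCoherent (X : Type u) [TopologicalSpace X] : Prop :=
  ∀ Q₁ Q₂ : Set X, IsCompact Q₁ → IsSaturatedSet Q₁ → IsCompact Q₂ → IsSaturatedSet Q₂ →
    IsCompact (Q₁ ∩ Q₂)

/-- A stably compact space: T0, compact, locally compact, sober and coherent. -/
def IsStablyCompact (X : Type u) [TopologicalSpace X] : Prop :=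
  T0Space X ∧ CompactSpace X ∧ LocallyCompactSpace X ∧ QuasiSober X ∧ IsCoherent X

/-- A proper map: continuous, the downward closure of the image of any closed set is
closed, and the preimage of `↑y` is compact for every `y`. -/
def PaperProper [TopologicalSpace X] [TopologicalSpace Y] (r : X → Y) : Prop :=
  Continuous r ∧
  (∀ F : Set X, IsClosed F → IsClosed (specDownSet (r '' F))) ∧
  ∀ y : Y, IsCompact (r ⁻¹' specUp y)

/-- The Smyth powerspace: nonempty compact saturated subsets. -/
def SmythP (X : Type u) [TopologicalSpace X] : Type u :=
  {Q : Set X // Q.Nonempty ∧ IsCompact Q ∧ IsSaturatedSet Q}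

/-- The upper Vietoris topology on the Smyth powerspace, generated by the sets
`◻U = {Q | Q ⊆ U}`, `U` open. -/
instance SmythP.instTopologicalSpace [TopologicalSpace X] : TopologicalSpace (SmythP X) :=
  TopologicalSpace.generateFrom
    {S | ∃ U : Set X, IsOpen U ∧ S = {Q : SmythP X | Q.1 ⊆ U}}

/-- The order on the Smyth powerspace: reverse inclusion. -/
instance SmythP.instPartialOrder [TopologicalSpace X] : PartialOrder (SmythP X) where
  le Q Q' := Q'.1 ⊆ Q.1
  le_refl Q := subset_rfl
  le_trans Q Q' Q'' h1 h2 := subset_trans h2 h1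
  le_antisymm Q Q' h1 h2 := Subtype.ext (subset_antisymm h2 h1)

/-- A quasi-retraction `r : X → Y`: a continuous map admitting a continuous
quasi-section `ς : Y → S_V(X)` with `↑{r x | x ∈ ς y} = ↑y` for every `y`. -/
def IsQuasiRetraction [TopologicalSpace X] [TopologicalSpace Y] (r : X → Y) : Prop :=
  Continuous r ∧
  ∃ ς : Y → SmythP X, Continuous ς ∧ ∀ y : Y, specUpSet (r '' (ς y).1) = specUp y

/-- The specialization ordering of a T0 space, as a partial order. -/
def specOrder (X : Type u) [TopologicalSpace X] [T0Space X] : PartialOrder X where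
  le := specLE
  le_refl x := fun _ _ h => h
  le_trans x y z h1 h2 := fun U hU hx => h2 U hU (h1 U hU hx)
  le_antisymm x y h1 h2 :=
    (inseparable_iff_forall_isOpen.mpr fun U hU => ⟨h1 U hU, h2 U hU⟩).eq

/-- A continuous probability valuation on a topological space: a map from opens to
nonnegative reals that is strict, monotone, modular, continuous (preserves directed
suprema of opens) and normalized. -/
structure IsProbValuation [TopologicalSpace X] (ν : Opens X → NNReal) : Prop where
  empty : ν ⊥ = 0
  mono : ∀ U V : Opens X, U ≤ V → ν U ≤ ν V
  modular : ∀ U V : Opens X, ν (U ⊔ V) + ν (U ⊓ V) = ν U + ν V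
  scont : ∀ S : Set (Opens X), S.Nonempty → DirectedOn (· ≤ ·) S →
    ν (sSup S) = ⨆ U ∈ S, ν U
  total : ν ⊤ = 1

/-- `V_1(X)`: the probability valuations on `X`, ordered pointwise. -/
abbrev ProbVal (X : Type u) [TopologicalSpace X] : Type u :=
  {ν : Opens X → NNReal // IsProbValuation ν}

/-- The weak topology on `V_1(X)`, generated by the sets `[U > a]`. -/
def weakTop (X : Type u) [TopologicalSpace X] : TopologicalSpace (ProbVal X) :=
  TopologicalSpace.generateFrom
    {S | ∃ (U : Opens X) (a : ℝ), S = {ν : ProbVal X | a < (ν.1 U : ℝ)}}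

/-- `ν†(Q) = inf {ν U | U open, Q ⊆ U}`. -/
noncomputable def dagVal [TopologicalSpace X] (ν : Opens X → NNReal) (Q : Set X) :
    NNReal :=
  ⨅ U : {U : Opens X // Q ⊆ U.1}, ν U.1

end Spaces

section Paths

variable {Y : Type u}

/-- A path in a pointed poset: a finite covering chain starting at the least
element. -/
def IsPathIn [PartialOrder Y] (bot : Y) (S : Set Y) : Prop :=
  ∃ (n : ℕ) (c : Fin (n + 1) → Y), c 0 = bot ∧
    (∀ i : Fin n, c i.castSucc ⋖ c i.succ) ∧ S = Set.range c

/-- The path space `Π(Y)` of a pointed poset, ordered by inclusion. -/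
abbrev PathSpace (Y : Type u) [PartialOrder Y] (bot : Y) : Type u :=
  {S : Set Y // IsPathIn bot S}

end Paths

/-! ### Compact interpolation between open sets -/

section WayInside

variable {X : Type u} [TopologicalSpace X]

/-- `W` is way inside `U`: some compact saturated set lies between `W` and `U`. In a locally
compact space this is the way-below relation on open sets. Saturation of the interpolant is
what lets coherence apply to intersections. -/
def WayInside (W U : Opens X) : Prop :=
  ∃ Q : Set X, IsCompact Q ∧ IsSaturatedSet Q ∧ (W : Set X) ⊆ Q ∧ Q ⊆ (U : Set X)

lemma WayInside.le {W U : Opens X} (h : WayInside W U) : W ≤ U := by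
  obtain ⟨Q, -, -, h1, h2⟩ := h
  exact h1.trans h2

lemma WayInside.mono_left {W W' U : Opens X} (hW : W ≤ W') (h : WayInside W' U) :
    WayInside W U := by
  obtain ⟨Q, hQ, hs, h1, h2⟩ := h
  exact ⟨Q, hQ, hs, Subset.trans hW h1, h2⟩

lemma WayInside.mono_right {W U U' : Opens X} (h : WayInside W U) (hU : U ≤ U') :
    WayInside W U' := by
  obtain ⟨Q, hQ, hs, h1, h2⟩ := h
  exact ⟨Q, hQ, hs, h1, h2.trans hU⟩

lemma wayInside_bot (U : Opens X) : WayInside ⊥ U :=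
  ⟨∅, isCompact_empty, fun x hx => hx.elim, by simp, empty_subset _⟩

lemma wayInside_top [CompactSpace X] : WayInside (⊤ : Opens X) ⊤ :=
  ⟨univ, isCompact_univ, fun _ _ _ _ => trivial, by simp, by simp⟩

lemma WayInside.sup {W W' U U' : Opens X} (h : WayInside W U) (h' : WayInside W' U') :
    WayInside (W ⊔ W') (U ⊔ U') := by
  obtain ⟨Q, hQ, hs, h1, h2⟩ := h
  obtain ⟨Q', hQ', hs', h1', h2'⟩ := h'
  refine ⟨Q ∪ Q', hQ.union hQ', ?_, ?_, ?_⟩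
  · rintro x (hx | hx) y hxy
    · exact Or.inl (hs x hx y hxy)
    · exact Or.inr (hs' x hx y hxy)
  · rw [Opens.coe_sup]
    exact union_subset_union h1 h1'
  · rw [Opens.coe_sup]
    exact union_subset_union h2 h2'

lemma WayInside.inf (hc : IsCoherent X) {W W' U U' : Opens X} (h : WayInside W U)
    (h' : WayInside W' U') : WayInside (W ⊓ W') (U ⊓ U') := by
  obtain ⟨Q, hQ, hs, h1, h2⟩ := h
  obtain ⟨Q', hQ', hs', h1', h2'⟩ := h'
  refine ⟨Q ∩ Q', hc Q Q' hQ hs hQ' hs', ?_, ?_, ?_⟩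
  · rintro x ⟨hx, hx'⟩ y hxy
    exact ⟨hs x hx y hxy, hs' x hx' y hxy⟩
  · rw [Opens.coe_inf]
    exact inter_subset_inter h1 h1'
  · rw [Opens.coe_inf]
    exact inter_subset_inter h2 h2'

lemma exists_wayInside [LocallyCompactSpace X] {Q : Set X} (hQ : IsCompact Q) {U : Opens X}
    (h : Q ⊆ U) : ∃ W : Opens X, Q ⊆ W ∧ WayInside W U := by
  obtain ⟨L, hL, h1, h2⟩ := exists_compact_between hQ U.2 h
  refine ⟨⟨interior L, isOpen_interior⟩, h1, nhdsKer L, hL.nhdsKer, ?_,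
    interior_subset.trans subset_nhdsKer, U.2.nhdsKer_subset.2 h2⟩
  intro x hx y hxy
  rw [mem_nhdsKer] at hx ⊢
  exact fun V hV hLV => hxy V hV (hx V hV hLV)

lemma WayInside.exists_of_sup [LocallyCompactSpace X] {W U U' : Opens X}
    (h : WayInside W (U ⊔ U')) :
    ∃ V V' : Opens X, WayInside V U ∧ WayInside V' U' ∧ W ≤ V ⊔ V' := by
  obtain ⟨Q, hQ, -, h1, h2⟩ := h
  let ι := {p : Opens X × Opens X // WayInside p.1 U ∧ WayInside p.2 U'}
  have : Nonempty ι := ⟨⟨(⊥, ⊥), wayInside_bot _, wayInside_bot _⟩⟩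
  obtain ⟨p, hp⟩ := hQ.elim_directed_cover (fun p : ι => ((p.1.1 ⊔ p.1.2 : Opens X) : Set X))
    (fun p => (p.1.1 ⊔ p.1.2).2) (by
      intro x hx
      rw [mem_iUnion]
      rcases h2 hx with hxU | hxU
      · obtain ⟨V, hV, hVU⟩ := exists_wayInside (Q := {x}) isCompact_singleton (U := U)
          (singleton_subset_iff.2 hxU)
        exact ⟨⟨(V, ⊥), hVU, wayInside_bot _⟩, Or.inl (hV rfl)⟩
      · obtain ⟨V, hV, hVU⟩ := exists_wayInside (Q := {x}) isCompact_singleton (U := U')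
          (singleton_subset_iff.2 hxU)
        exact ⟨⟨(⊥, V), wayInside_bot _, hVU⟩, Or.inr (hV rfl)⟩)
    (by
      intro p q
      refine ⟨⟨(p.1.1 ⊔ q.1.1, p.1.2 ⊔ q.1.2), ?_, ?_⟩, ?_, ?_⟩
      · simpa using p.2.1.sup q.2.1
      · simpa using p.2.2.sup q.2.2
      · exact sup_le_sup le_sup_left le_sup_left
      · exact sup_le_sup le_sup_right le_sup_right)
  exact ⟨p.1.1, p.1.2, p.2.1, p.2.2, h1.trans hp⟩

lemma WayInside.exists_mem_of_sSup {W : Opens X} {S : Set (Opens X)} (hne : S.Nonempty)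
    (hS : DirectedOn (· ≤ ·) S) (h : WayInside W (sSup S)) : ∃ U ∈ S, WayInside W U := by
  obtain ⟨Q, hQ, hs, h1, h2⟩ := h
  have := hne.to_subtype
  obtain ⟨U, hU⟩ := hQ.elim_directed_cover (fun U : S => (U.1 : Set X)) (fun U => U.1.2)
    (by
      intro x hx
      have := h2 hx
      rw [SetLike.mem_coe, Opens.mem_sSup] at this
      obtain ⟨U, hU, hxU⟩ := this
      exact mem_iUnion.2 ⟨⟨U, hU⟩, hxU⟩)
    (by
      intro U V
      obtain ⟨Z, hZ, h3, h4⟩ := hS U.1 U.2 V.1 V.2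
      exact ⟨⟨Z, hZ⟩, h3, h4⟩)
  exact ⟨U.1, U.2, Q, hQ, hs, h1, hU⟩

end WayInside

/-! ### Finitely additive valuations and their continuous parts -/

section FinVal

open scoped Topology

variable {X : Type u} [TopologicalSpace X]

/-- A probability valuation on the lattice of open sets, without the continuity axiom. -/
structure IsFinVal (m : Opens X → NNReal) : Prop where
  empty : m ⊥ = 0
  mono : ∀ U V : Opens X, U ≤ V → m U ≤ m V
  modular : ∀ U V : Opens X, m (U ⊔ V) + m (U ⊓ V) = m U + m V
  total : m ⊤ = 1

/-- The space of finitely additive probability valuations; as a subtype of a function space it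
carries the topology of pointwise convergence. -/
abbrev FinVal (X : Type u) [TopologicalSpace X] : Type u :=
  {m : Opens X → NNReal // IsFinVal m}

lemma IsFinVal.le_one {m : Opens X → NNReal} (hm : IsFinVal m) (U : Opens X) : m U ≤ 1 :=
  hm.total ▸ hm.mono U ⊤ le_top

lemma IsProbValuation.isFinVal {ν : Opens X → NNReal} (h : IsProbValuation ν) : IsFinVal ν :=
  ⟨h.empty, h.mono, h.modular, h.total⟩

lemma continuous_finVal_apply (U : Opens X) : Continuous fun m : FinVal X => m.1 U :=
  (continuous_apply U).comp continuous_subtype_val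

instance : CompactSpace (FinVal X) := by
  refine isCompact_iff_compactSpace (s := {m : Opens X → NNReal | IsFinVal m}).1 ?_
  refine IsCompact.of_isClosed_subset
    (isCompact_univ_pi fun _ : Opens X => isCompact_Icc (a := (0 : NNReal)) (b := 1)) ?_
    (fun m hm U _ => ⟨zero_le, hm.le_one U⟩)
  have : {m : Opens X → NNReal | IsFinVal m} =
      {m | m ⊥ = 0} ∩ (⋂ U : Opens X, ⋂ V : Opens X, ⋂ _ : U ≤ V, {m | m U ≤ m V}) ∩
      (⋂ U : Opens X, ⋂ V : Opens X, {m | m (U ⊔ V) + m (U ⊓ V) = m U + m V}) ∩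
      {m | m ⊤ = 1} := by
    ext m
    simp only [mem_inter_iff, mem_iInter, mem_ofPred_eq]
    exact ⟨fun h => ⟨⟨⟨h.empty, h.mono⟩, h.modular⟩, h.total⟩,
      fun h => ⟨h.1.1.1, h.1.1.2, h.1.2, h.2⟩⟩
  rw [this]
  refine ((IsClosed.inter ?_ ?_).inter ?_).inter ?_
  · exact isClosed_eq (by fun_prop) (by fun_prop)
  · exact isClosed_iInter fun U => isClosed_iInter fun V => isClosed_iInter fun _ =>
      isClosed_le (by fun_prop) (by fun_prop)
  · exact isClosed_iInter fun U => isClosed_iInter fun V =>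
      isClosed_eq (by fun_prop) (by fun_prop)
  · exact isClosed_eq (by fun_prop) (by fun_prop)

/-- The continuous part `U ↦ sup {m W | W way inside U}` of a finitely additive valuation. -/
noncomputable def contPart (m : Opens X → NNReal) (U : Opens X) : NNReal :=
  ⨆ W : {W : Opens X // WayInside W U}, m W.1

lemma contPart_le {m : Opens X → NNReal} {U : Opens X} {c : NNReal}
    (h : ∀ W, WayInside W U → m W ≤ c) : contPart m U ≤ c :=
  ciSup_le' fun W => h W.1 W.2

lemma IsFinVal.le_contPart {m : Opens X → NNReal} (hm : IsFinVal m) {W U : Opens X}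
    (h : WayInside W U) : m W ≤ contPart m U :=
  le_ciSup_of_le (f := fun W : {W : Opens X // WayInside W U} => m W.1)
    ⟨1, by rintro _ ⟨W, rfl⟩; exact hm.le_one _⟩ ⟨W, h⟩ le_rfl

lemma exists_of_lt_contPart {m : Opens X → NNReal} {U : Opens X} {a : NNReal}
    (h : a < contPart m U) : ∃ W, WayInside W U ∧ a < m W := by
  obtain ⟨W, hW⟩ := exists_lt_of_lt_ciSup' h
  exact ⟨W.1, W.2, hW⟩

lemma contPart_add_le {m : Opens X → NNReal} {A B : Opens X} {c : NNReal}
    (h : ∀ W W', WayInside W A → WayInside W' B → m W + m W' ≤ c) :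
    contPart m A + contPart m B ≤ c := by
  have h1 : ∀ W', WayInside W' B → contPart m A ≤ c - m W' := fun W' hW' =>
    contPart_le fun W hW => le_tsub_of_add_le_right (h W W' hW hW')
  have h2 : ∀ W', WayInside W' B → m W' ≤ c := fun W' hW' =>
    le_add_self.trans (h ⊥ W' (wayInside_bot _) hW')
  have h3 : contPart m A ≤ c := (h1 ⊥ (wayInside_bot _)).trans tsub_le_self
  rw [add_comm]
  refine add_le_of_le_tsub_right_of_le h3 (contPart_le fun W' hW' => ?_)
  refine le_tsub_of_add_le_left ?_
  exact add_le_of_le_tsub_right_of_le (h2 W' hW') (h1 W' hW')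

lemma le_biSup_of_le_one {f : Opens X → NNReal} (hf : ∀ U, f U ≤ 1) {S : Set (Opens X)}
    {U : Opens X} (hU : U ∈ S) : f U ≤ ⨆ U ∈ S, f U := by
  refine le_ciSup_of_le ⟨1, ?_⟩ U ?_
  · rintro _ ⟨V, rfl⟩
    exact ciSup_le' fun _ => hf V
  · exact le_ciSup_of_le ⟨1, by rintro _ ⟨_, rfl⟩; exact hf U⟩ hU le_rfl

lemma IsProbValuation.exists_lt {ν : Opens X → NNReal} (h : IsProbValuation ν)
    {S : Set (Opens X)} (hne : S.Nonempty) (hS : DirectedOn (· ≤ ·) S) {a : NNReal}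
    (ha : a < ν (sSup S)) : ∃ U ∈ S, a < ν U := by
  rw [h.scont S hne hS] at ha
  obtain ⟨U, hU⟩ := exists_lt_of_lt_ciSup' ha
  obtain ⟨hUS, hU⟩ := exists_lt_of_lt_ciSup' hU
  exact ⟨U, hUS, hU⟩

/-- Multiplicativity of `WayInside`, which rests on coherence and compactness of the space,
makes the continuous part modular and normalized. -/
lemma isProbValuation_contPart [CompactSpace X] [LocallyCompactSpace X] (hc : IsCoherent X)
    {m : Opens X → NNReal} (hm : IsFinVal m) : IsProbValuation (contPart m) := by
  have hmono : ∀ U V : Opens X, U ≤ V → contPart m U ≤ contPart m V := fun U V hUV =>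
    contPart_le fun W hW => hm.le_contPart (hW.mono_right hUV)
  have hle : ∀ U, contPart m U ≤ m U := fun U => contPart_le fun W hW => hm.mono _ _ hW.le
  refine ⟨?_, hmono, ?_, ?_, ?_⟩
  · exact le_antisymm ((hle ⊥).trans hm.empty.le) zero_le
  · intro U V
    refine le_antisymm (contPart_add_le ?_) (contPart_add_le ?_)
    · intro W W' hW hW'
      obtain ⟨A, B, hA, hB, hWAB⟩ := hW.exists_of_sup
      have hA' : WayInside (A ⊔ W') U := by
        simpa using hA.sup (hW'.mono_right inf_le_left)
      have hB' : WayInside (B ⊔ W') V := by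
        simpa using hB.sup (hW'.mono_right inf_le_right)
      calc m W + m W' ≤ m ((A ⊔ W') ⊔ (B ⊔ W')) + m ((A ⊔ W') ⊓ (B ⊔ W')) :=
            add_le_add
              (hm.mono _ _ (hWAB.trans (sup_le_sup le_sup_left le_sup_left)))
              (hm.mono _ _ (le_inf le_sup_right le_sup_right))
        _ = m (A ⊔ W') + m (B ⊔ W') := hm.modular _ _
        _ ≤ _ := add_le_add (hm.le_contPart hA') (hm.le_contPart hB')
    · intro W W' hW hW'
      rw [← hm.modular]
      exact add_le_add (hm.le_contPart (hW.sup hW')) (hm.le_contPart (hW.inf hc hW'))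
  · intro S hne hS
    refine le_antisymm (contPart_le fun W hW => ?_) ?_
    · obtain ⟨U, hU, hWU⟩ := hW.exists_mem_of_sSup hne hS
      exact (hm.le_contPart hWU).trans
        (le_biSup_of_le_one (fun V => (hle V).trans (hm.le_one V)) hU)
    · exact ciSup_le' fun U => ciSup_le' fun hU => hmono _ _ (le_sSup hU)
  · exact le_antisymm ((hle ⊤).trans hm.total.le)
      (hm.total.symm.le.trans (hm.le_contPart wayInside_top))

lemma IsProbValuation.contPart_eq [LocallyCompactSpace X] {ν : Opens X → NNReal}
    (h : IsProbValuation ν) : contPart ν = ν := by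
  funext U
  refine le_antisymm (contPart_le fun W hW => h.mono _ _ hW.le) (le_of_forall_lt fun a ha => ?_)
  have hU : sSup {W | WayInside W U} = U := by
    refine le_antisymm (sSup_le fun W hW => hW.le) fun x hx => ?_
    obtain ⟨V, hV, hVU⟩ := exists_wayInside (Q := {x}) isCompact_singleton (U := U)
      (singleton_subset_iff.2 hx)
    exact Opens.mem_sSup.2 ⟨V, hVU, hV rfl⟩
  rw [← hU] at ha
  obtain ⟨W, hW, haW⟩ := h.exists_lt ⟨⊥, wayInside_bot U⟩
    (fun A hA B hB => ⟨A ⊔ B, by simpa using WayInside.sup hA hB, le_sup_left, le_sup_right⟩) ha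
  exact haW.trans_le (h.isFinVal.le_contPart hW)

lemma isOpen_weakTop_lt (U : Opens X) (a : NNReal) :
    IsOpen[weakTop X] {ν : ProbVal X | a < ν.1 U} :=
  TopologicalSpace.isOpen_generateFrom_of_mem ⟨U, a, by ext ν; simp⟩

/-- The map from the compact space `FinVal X` onto `V_1(X)` taking continuous parts. It fixes
continuous valuations, although the inclusion of `V_1(X)` into `FinVal X` need not be continuous. -/
noncomputable def contRetr [CompactSpace X] [LocallyCompactSpace X] (hc : IsCoherent X)
    (m : FinVal X) : ProbVal X :=
  ⟨contPart m.1, isProbValuation_contPart hc m.2⟩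

lemma continuous_contRetr [CompactSpace X] [LocallyCompactSpace X] (hc : IsCoherent X) :
    Continuous[_, weakTop X] (contRetr hc) := by
  refine continuous_generateFrom_iff.2 ?_
  rintro _ ⟨U, a, rfl⟩
  rcases lt_or_ge a 0 with ha | ha
  · convert isOpen_univ
    ext m
    simpa using ha.trans_le (NNReal.coe_nonneg _)
  lift a to NNReal using ha
  have : contRetr hc ⁻¹' {ν : ProbVal X | (a : ℝ) < ν.1 U} =
      ⋃ W : {W : Opens X // WayInside W U}, {m : FinVal X | a < m.1 W.1} := by
    ext m
    simp only [mem_preimage, mem_ofPred_eq, mem_iUnion, NNReal.coe_lt_coe]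
    constructor
    · intro h
      obtain ⟨W, hW, h⟩ := exists_of_lt_contPart h
      exact ⟨⟨W, hW⟩, h⟩
    · rintro ⟨W, h⟩
      exact h.trans_le (m.2.le_contPart W.2)
  rw [this]
  exact isOpen_iUnion fun W => isOpen_lt continuous_const (continuous_finVal_apply _)

lemma contRetr_of_probVal [CompactSpace X] [LocallyCompactSpace X] (hc : IsCoherent X)
    (ν : ProbVal X) : contRetr hc ⟨ν.1, ν.2.isFinVal⟩ = ν :=
  Subtype.ext ν.2.contPart_eq

/-- The specialization preorder of the weak topology is the pointwise order. -/
lemma specLE_weakTop_iff {ν ν' : ProbVal X} :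
    @specLE _ (weakTop X) ν ν' ↔ ∀ U, ν.1 U ≤ ν'.1 U := by
  constructor
  · intro h U
    by_contra! hlt
    exact lt_irrefl (ν'.1 U) (h {ξ | ν'.1 U < ξ.1 U} (isOpen_weakTop_lt U (ν'.1 U)) hlt)
  · intro h O hO hν
    induction hO with
    | basic s hs =>
      obtain ⟨U, a, rfl⟩ := hs
      exact lt_of_lt_of_le (α := ℝ) hν (h U)
    | univ => trivial
    | inter s t _ _ ihs iht => exact ⟨ihs hν.1, iht hν.2⟩
    | sUnion S _ ih =>
      obtain ⟨s, hs, hνs⟩ := hν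
      exact ⟨s, hs, ih s hs hνs⟩

end FinVal

/-! ### Valuations along a proper map -/

section Proper

open scoped Topology

variable {X : Type u} {Y : Type v} [TopologicalSpace X] [TopologicalSpace Y]

lemma isProbValuation_comap (r : C(X, Y)) {ν : Opens X → NNReal} (h : IsProbValuation ν) :
    IsProbValuation fun V => ν (Opens.comap r V) := by
  refine ⟨?_, ?_, ?_, ?_, ?_⟩
  · simpa using h.empty
  · exact fun U V hUV => h.mono _ _ (OrderHomClass.mono (Opens.comap r) hUV)
  · intro U V
    simpa using h.modular (Opens.comap r U) (Opens.comap r V)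
  · intro S hne hS
    refine le_antisymm (le_of_forall_lt fun a ha => ?_)
      (ciSup_le' fun U => ciSup_le' fun hU =>
        h.mono _ _ (OrderHomClass.mono (Opens.comap r) (le_sSup hU)))
    rw [map_sSup] at ha
    obtain ⟨_, ⟨U, hU, rfl⟩, haU⟩ := h.exists_lt (hne.image _) (by
      rintro _ ⟨U, hU, rfl⟩ _ ⟨V, hV, rfl⟩
      obtain ⟨Z, hZ, h1, h2⟩ := hS U hU V hV
      exact ⟨_, ⟨Z, hZ, rfl⟩, OrderHomClass.mono (Opens.comap r) h1,
        OrderHomClass.mono (Opens.comap r) h2⟩) ha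
    exact haU.trans_le (le_biSup_of_le_one
      (f := fun V => ν (Opens.comap r V)) (fun V => h.isFinVal.le_one _) hU)
  · simpa using h.total

/-- The image valuation `V ↦ ν (r⁻¹ V)`. -/
def pushVal (r : C(X, Y)) (ν : ProbVal X) : ProbVal Y :=
  ⟨fun V => ν.1 (Opens.comap r V), isProbValuation_comap r ν.2⟩

lemma continuous_pushVal (r : C(X, Y)) : Continuous[weakTop X, weakTop Y] (pushVal r) := by
  refine (@continuous_generateFrom_iff _ _ _ (weakTop X) _).2 ?_
  rintro _ ⟨V, a, rfl⟩
  exact TopologicalSpace.isOpen_generateFrom_of_mem ⟨Opens.comap r V, a, rfl⟩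

/-- A point `y` of `V` has a neighbourhood whose preimage is way inside that of `V`: the compact
set `r⁻¹(↑y)` has a neighbourhood `W` way inside `r⁻¹ V`, and the complement of the closed set
`↓r(X \ W)` is a neighbourhood of `y` with preimage inside `W`. -/
lemma exists_comap_wayInside [LocallyCompactSpace X] (r : C(X, Y)) (hr : PaperProper r)
    {V : Opens Y} {y : Y} (hy : y ∈ V) :
    ∃ V' : Opens Y, y ∈ V' ∧ WayInside (Opens.comap r V') (Opens.comap r V) := by
  obtain ⟨W, hW, hWV⟩ := exists_wayInside (hr.2.2 y) (U := Opens.comap r V)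
    (fun x hx => hx V V.2 hy)
  refine ⟨⟨(specDownSet (r '' (W : Set X)ᶜ))ᶜ,
    (hr.2.1 _ W.2.isClosed_compl).isOpen_compl⟩, ?_, hWV.mono_left ?_⟩
  · rintro ⟨_, ⟨x, hx, rfl⟩, hyx⟩
    exact hx (hW hyx)
  · intro x hx
    by_contra hxW
    exact hx ⟨r x, ⟨x, hxW, rfl⟩, fun _ _ h => h⟩

lemma exists_lt_comap_wayInside [LocallyCompactSpace X] (r : C(X, Y)) (hr : PaperProper r)
    (μ : ProbVal Y) {V : Opens Y} {a : NNReal} (ha : a < μ.1 V) :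
    ∃ V' : Opens Y, WayInside (Opens.comap r V') (Opens.comap r V) ∧ a < μ.1 V' := by
  have hV : V ≤ sSup {V' | WayInside (Opens.comap r V') (Opens.comap r V)} := fun y hy => by
    obtain ⟨V', hy', h⟩ := exists_comap_wayInside r hr hy
    exact Opens.mem_sSup.2 ⟨V', h, hy'⟩
  exact μ.2.exists_lt (S := {V' | WayInside (Opens.comap r V') (Opens.comap r V)}) ⟨⊥, by
      rw [mem_ofPred_eq, map_bot]
      exact wayInside_bot _⟩
    (fun A hA B hB => ⟨A ⊔ B, by
      have := WayInside.sup hA hB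
      rwa [← map_sup, sup_idem] at this, le_sup_left, le_sup_right⟩)
    (ha.trans_le (μ.2.mono _ _ hV))

/-- Passing to the continuous part does not destroy a lower bound on the image valuation. -/
lemma le_contPart_comap [LocallyCompactSpace X] (r : C(X, Y)) (hr : PaperProper r)
    {μ : ProbVal Y} {m : FinVal X} (h : ∀ V, μ.1 V ≤ m.1 (Opens.comap r V)) (V : Opens Y) :
    μ.1 V ≤ contPart m.1 (Opens.comap r V) := by
  refine le_of_forall_lt fun a ha => ?_
  obtain ⟨V', hV', haV'⟩ := exists_lt_comap_wayInside r hr μ ha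
  exact haV'.trans_le ((h V').trans (m.2.le_contPart hV'))

lemma isCompact_preimage_specUp [CompactSpace X] [LocallyCompactSpace X] (hc : IsCoherent X)
    (r : C(X, Y)) (hr : PaperProper r) (μ : ProbVal Y) :
    @IsCompact _ (weakTop X) (pushVal r ⁻¹' @specUp _ (weakTop Y) μ) := by
  have hK : IsCompact {m : FinVal X | ∀ V, μ.1 V ≤ m.1 (Opens.comap r V)} := by
    refine IsClosed.isCompact ?_
    rw [ofPred_forall]
    exact isClosed_iInter fun V => isClosed_le continuous_const (continuous_finVal_apply _)
  convert @IsCompact.image _ _ _ (weakTop X) _ _ hK (continuous_contRetr hc)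
  ext ν
  constructor
  · intro h
    exact ⟨⟨ν.1, ν.2.isFinVal⟩, specLE_weakTop_iff.1 h, contRetr_of_probVal hc ν⟩
  · rintro ⟨m, hm, rfl⟩
    exact specLE_weakTop_iff.2 (le_contPart_comap r hr hm)

/-- If `μ` is not below the image of `F`, every point of the compact set `contRetr⁻¹(F)` is
separated from `μ` by a strict inequality at an open set way inside the one witnessing the
failure; finitely many such inequalities give a neighbourhood of `μ`. -/
lemma isClosed_specDownSet_pushVal [CompactSpace X] [LocallyCompactSpace X]
    (hc : IsCoherent X) (r : C(X, Y)) (hr : PaperProper r) {F : Set (ProbVal X)}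
    (hF : IsClosed[weakTop X] F) :
    IsClosed[weakTop Y] (@specDownSet _ (weakTop Y) (pushVal r '' F)) := by
  rw [← @isOpen_compl_iff _ _ (weakTop Y)]
  refine (@isOpen_iff_forall_mem_open _ (weakTop Y) _).2 fun μ hμ => ?_
  have hK : IsCompact (contRetr hc ⁻¹' F) :=
    (@IsClosed.preimage _ _ _ (weakTop X) _ (continuous_contRetr hc) _ hF).isCompact
  have key : ∃ O : Set (ProbVal Y), IsOpen[weakTop Y] O ∧ μ ∈ O ∧ ∀ μ' ∈ O, ∀ ν : ProbVal X,
      (⟨ν.1, ν.2.isFinVal⟩ : FinVal X) ∈ contRetr hc ⁻¹' F →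
        ¬ ∀ V, μ'.1 V ≤ ν.1 (Opens.comap r V) := by
    refine hK.induction_on (p := fun s => ∃ O : Set (ProbVal Y), IsOpen[weakTop Y] O ∧ μ ∈ O ∧
      ∀ μ' ∈ O, ∀ ν : ProbVal X, (⟨ν.1, ν.2.isFinVal⟩ : FinVal X) ∈ s →
        ¬ ∀ V, μ'.1 V ≤ ν.1 (Opens.comap r V)) ?_ ?_ ?_ ?_
    · exact ⟨univ, @isOpen_univ _ (weakTop Y), trivial, fun _ _ _ h => h.elim⟩
    · rintro s t hst ⟨O, hO, hμO, h⟩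
      exact ⟨O, hO, hμO, fun μ' hμ' ν hν => h μ' hμ' ν (hst hν)⟩
    · rintro s t ⟨O, hO, hμO, h⟩ ⟨O', hO', hμO', h'⟩
      refine ⟨O ∩ O', @IsOpen.inter _ (weakTop Y) _ _ hO hO', ⟨hμO, hμO'⟩, ?_⟩
      rintro μ' ⟨h1, h2⟩ ν (hν | hν)
      · exact h μ' h1 ν hν
      · exact h' μ' h2 ν hν
    · intro m hm
      have hnot : ¬ ∀ V, μ.1 V ≤ contPart m.1 (Opens.comap r V) := fun hle =>
        hμ ⟨_, ⟨_, hm, rfl⟩, specLE_weakTop_iff.2 hle⟩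
      push Not at hnot
      obtain ⟨V, hV⟩ := hnot
      obtain ⟨a, ha, haV⟩ := exists_between hV
      obtain ⟨V', hV', haV'⟩ := exists_lt_comap_wayInside r hr μ haV
      refine ⟨{m' | m'.1 (Opens.comap r V') < a}, mem_nhdsWithin_of_mem_nhds
        ((isOpen_lt (continuous_finVal_apply _) continuous_const).mem_nhds
          ((m.2.le_contPart hV').trans_lt ha)),
        {μ' | a < μ'.1 V'}, isOpen_weakTop_lt V' a, haV', ?_⟩
      intro μ' hμ' ν hν hle
      exact lt_irrefl _ ((hμ'.trans_le (hle V')).trans hν)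
  obtain ⟨O, hO, hμO, h⟩ := key
  refine ⟨O, ?_, hO, hμO⟩
  rintro μ' hμ' ⟨_, ⟨ν, hν, rfl⟩, hle⟩
  refine h μ' hμ' ν ?_ (specLE_weakTop_iff.1 hle)
  rwa [mem_preimage, contRetr_of_probVal]

/-- On a finite sublattice `M` of opens of `Y`, the part of `μ` carried by `W ∈ M`, namely
`V ↦ μ (V ⊓ W)`, is the image of a finitely additive valuation on `X`. The valuation is a finite
combination of point masses: if `W'` is a lower cover of `W` in `M`, a point mass over `W \ W'` of
weight `μ W - μ W'` extends a combination for `W'` to one for `W`. -/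
lemma exists_simple_on_finite (r : C(X, Y)) (hsurj : Function.Surjective r) (μ : ProbVal Y)
    {M : Set (Opens Y)} (hfin : M.Finite) (hM : IsSublattice M) (hbot : ⊥ ∈ M) :
    ∀ W ∈ M, ∃ m : Opens X → NNReal, m ⊥ = 0 ∧ (∀ U V, U ≤ V → m U ≤ m V) ∧
      (∀ U V, m (U ⊔ V) + m (U ⊓ V) = m U + m V) ∧
      ∀ V ∈ M, m (Opens.comap r V) = μ.1 (V ⊓ W) := by
  classical
  have := hfin.to_subtype
  suffices H : ∀ W : M, ∃ m : Opens X → NNReal, m ⊥ = 0 ∧ (∀ U V, U ≤ V → m U ≤ m V) ∧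
      (∀ U V, m (U ⊔ V) + m (U ⊓ V) = m U + m V) ∧
      ∀ V ∈ M, m (Opens.comap r V) = μ.1 (V ⊓ W.1) from fun W hW => H ⟨W, hW⟩
  intro W
  induction W using WellFoundedLT.induction with
  | ind W ih =>
  obtain ⟨W, hW⟩ := W
  by_cases hWbot : W = ⊥
  · subst hWbot
    exact ⟨fun _ => 0, rfl, fun _ _ _ => le_rfl, by simp, fun V _ => by simp [μ.2.empty]⟩
  obtain ⟨W', ⟨hW', hlt⟩, hmax⟩ := (hfin.subset (sep_subset M (· < W))).exists_maximal
    ⟨⊥, hbot, bot_lt_iff_ne_bot.2 hWbot⟩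
  obtain ⟨m, h0, hmono, hmod, hval⟩ := ih ⟨W', hW'⟩ hlt
  obtain ⟨y, hyW, hyW'⟩ := SetLike.exists_of_lt hlt
  obtain ⟨x, rfl⟩ := hsurj y
  let δ : Opens X → NNReal := fun U => if x ∈ U then μ.1 W - μ.1 W' else 0
  have hδ : ∀ U, δ U = if x ∈ U then μ.1 W - μ.1 W' else 0 := fun _ => rfl
  refine ⟨fun U => m U + δ U, ?_, ?_, ?_, ?_⟩
  · simp only [h0, hδ, zero_add]
    exact if_neg id
  · intro U V hUV
    refine add_le_add (hmono U V hUV) ?_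
    simp only [hδ]
    by_cases hxU : x ∈ U
    · simp [hxU, hUV hxU]
    · simp [hxU]
  · intro U V
    have : δ (U ⊔ V) + δ (U ⊓ V) = δ U + δ V := by
      have h1 : x ∈ U ⊔ V ↔ x ∈ U ∨ x ∈ V := Iff.rfl
      have h2 : x ∈ U ⊓ V ↔ x ∈ U ∧ x ∈ V := Iff.rfl
      simp only [hδ, h1, h2]
      by_cases hxU : x ∈ U <;> by_cases hxV : x ∈ V <;> simp [hxU, hxV]
    calc m (U ⊔ V) + δ (U ⊔ V) + (m (U ⊓ V) + δ (U ⊓ V))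
        = (m (U ⊔ V) + m (U ⊓ V)) + (δ (U ⊔ V) + δ (U ⊓ V)) := by ring
      _ = (m U + m V) + (δ U + δ V) := by rw [hmod, this]
      _ = _ := by ring
  · intro V hV
    have hVW : V ⊓ W ∈ M := hM.infClosed hV hW
    have hx : x ∈ Opens.comap r V ↔ r x ∈ V := Iff.rfl
    simp only [hδ, hx, hval V hV]
    -- `W'` is a lower cover of `W` in `M`, so `W' ⊔ (V ⊓ W)` is one of the two.
    rcases (sup_le hlt.le inf_le_right : W' ⊔ (V ⊓ W) ≤ W).lt_or_eq with h | h
    · have hle : V ⊓ W ≤ W' :=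
        le_sup_right.trans (hmax ⟨hM.supClosed hW' hVW, h⟩ le_sup_left)
      have hxV : r x ∉ V := fun hxV => hyW' (hle ⟨hxV, hyW⟩)
      rw [if_neg hxV, add_zero]
      exact congrArg μ.1 (le_antisymm (inf_le_inf_left _ hlt.le) (le_inf inf_le_left hle))
    · have hxV : r x ∈ V := by
        have : r x ∈ W' ⊔ (V ⊓ W) := by rwa [h]
        rcases this with h' | h'
        · exact (hyW' h').elim
        · exact h'.1
      have hmodY := μ.2.modular W' (V ⊓ W)
      have hinf : W' ⊓ (V ⊓ W) = V ⊓ W' := by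
        rw [inf_left_comm, inf_eq_left.2 hlt.le]
      rw [h, hinf] at hmodY
      have hle : μ.1 W' ≤ μ.1 W := μ.2.mono _ _ hlt.le
      rw [if_pos hxV]
      refine add_left_cancel (a := μ.1 W') ?_
      rw [← hmodY, add_left_comm, add_tsub_cancel_of_le hle, add_comm]

/-- Compactness of `FinVal X` upgrades the solutions on finite sublattices to a finitely additive
valuation with image `μ`. -/
lemma exists_finVal_comap_eq (r : C(X, Y)) (hsurj : Function.Surjective r) (μ : ProbVal Y) :
    ∃ m : FinVal X, ∀ V, m.1 (Opens.comap r V) = μ.1 V := by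
  have : (⋂ V : Opens Y, {m : FinVal X | m.1 (Opens.comap r V) = μ.1 V}).Nonempty := by
    refine CompactSpace.iInter_nonempty
      (fun V => isClosed_eq (continuous_finVal_apply _) continuous_const) fun t => ?_
    let s : Set (Opens Y) := insert ⊥ (insert ⊤ (t : Set (Opens Y)))
    have hs : s.Finite := (t.finite_toSet.insert _).insert _
    have hsub : s ⊆ latticeClosure s := subset_latticeClosure
    obtain ⟨m, h0, hmono, hmod, hval⟩ := exists_simple_on_finite r hsurj μ hs.latticeClosure
      isSublattice_latticeClosure (hsub (mem_insert _ _)) ⊤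
      (hsub (mem_insert_of_mem _ (mem_insert _ _)))
    have htot : m ⊤ = 1 := by
      have := hval ⊤ (hsub (mem_insert_of_mem _ (mem_insert _ _)))
      simpa [μ.2.total] using this
    refine ⟨⟨m, h0, hmono, hmod, htot⟩, mem_iInter₂.2 fun V hV => ?_⟩
    have := hval V (hsub (mem_insert_of_mem _ (mem_insert_of_mem _ hV)))
    simpa using this
  obtain ⟨m, hm⟩ := this
  exact ⟨m, mem_iInter.1 hm⟩

lemma surjective_pushVal [CompactSpace X] [LocallyCompactSpace X] (hc : IsCoherent X)
    (r : C(X, Y)) (hr : PaperProper r) (hsurj : Function.Surjective r) :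
    Function.Surjective (pushVal r) := by
  intro μ
  obtain ⟨m, hm⟩ := exists_finVal_comap_eq r hsurj μ
  refine ⟨contRetr hc m, Subtype.ext (funext fun V => le_antisymm ?_ ?_)⟩
  · exact (contPart_le fun W hW => m.2.mono _ _ hW.le).trans (hm V).le
  · exact le_contPart_comap r hr (fun V => (hm V).ge) V

end Proper

/-- Key Claim: if `r` is a proper surjective map from a stably compact space `X` to a
T0 space `Y`, then the induced map `V_{1 wk}(r)`, sending `ν` to `V ↦ ν (r⁻¹ V)`, is a
proper surjective map between the spaces of probability valuations with their weak
topologies. -/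
theorem keyClaim_proper_surjective_valuations {X : Type u} {Y : Type v}
    [TopologicalSpace X] [TopologicalSpace Y]
    (hX : IsStablyCompact X) (hY : T0Space Y)
    (r : X → Y) (hr : PaperProper r) (hsurj : Function.Surjective r) :
    ∃ Vr : ProbVal X → ProbVal Y,
      (∀ (ν : ProbVal X) (V : Opens Y),
        (Vr ν).1 V = ν.1 ⟨r ⁻¹' V.1, V.2.preimage hr.1⟩) ∧
      @PaperProper (ProbVal X) (ProbVal Y) (weakTop X) (weakTop Y) Vr ∧
      Function.Surjective Vr := by
  obtain ⟨-, hcomp, hloc, -, hcoh⟩ := hX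
  let R : C(X, Y) := ⟨r, hr.1⟩
  exact ⟨pushVal R, fun _ _ => rfl,
    ⟨continuous_pushVal R, fun _ hF => isClosed_specDownSet_pushVal hcoh R hr hF,
      isCompact_preimage_specUp hcoh R hr⟩,
    surjective_pushVal hcoh R hr hsurj⟩
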